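/- For every nonempty open set U ⊆ ℝ × ℝ and every finite family g₁, …, gₙ : ℝ × ℝ → ℝ of affine functions (gᵢ(s, z) = aᵢ·s + bᵢ·z + cᵢ), it is not the case that for every (s, z) ∈ U there exists an index i with s·z = gᵢ(s, z). In other words, the bilinear function f⋆(s, z) = s·z cannot be realized on any set with nonempty interior as a pointwise selection among finitely many affine functions. -/

import Mathlib

/-- The bilinear function `f⋆(s, z) = s * z` cannot be realized on any nonempty
open subset of `ℝ × ℝ` as a pointwise selection among finitely many affine
functions `gᵢ(s, z) = aᵢ*s + bᵢ*z + cᵢ`. -/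
theorem bilinear_not_piecewise_affine_on_open
    (U : Set (ℝ × ℝ)) (hU : IsOpen U) (hne : U.Nonempty)
    (n : ℕ) (a b c : Fin n → ℝ) :
    ¬ ∀ p ∈ U, ∃ i : Fin n, p.1 * p.2 = a i * p.1 + b i * p.2 + c i := by
  intro h
  obtain ⟨⟨s, z⟩, hp⟩ := hne
  have hcont : Continuous (fun t : ℝ => ((s + t, z + t) : ℝ × ℝ)) := by fun_prop
  have hopen := hU.preimage hcont
  have hinf : ((fun t : ℝ => ((s + t, z + t) : ℝ × ℝ)) ⁻¹' U).Infinite :=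
    infinite_of_mem_nhds (0 : ℝ) (hopen.mem_nhds (by simpa using hp))
  apply hinf
  have hfin : ∀ i : Fin n, {t : ℝ | t ^ 2 + (s + z - a i - b i) * t
      + (s * z - a i * s - b i * z - c i) = 0}.Finite := by
    intro i
    generalize s + z - a i - b i = β
    generalize s * z - a i * s - b i * z - c i = γ
    have hm : (Polynomial.X ^ 2 + Polynomial.C β * Polynomial.X + Polynomial.C γ :
        Polynomial ℝ).Monic := by monicity!
    refine (Polynomial.finite_setOf_isRoot hm.ne_zero).subset ?_
    intro t ht
    simpa [Polynomial.IsRoot] using ht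
  refine (Set.finite_iUnion hfin).subset ?_
  intro t ht
  obtain ⟨i, hi⟩ := h _ ht
  refine Set.mem_iUnion.2 ⟨i, ?_⟩
  simp only [Set.mem_setOf_eq] at hi ⊢
  linarith
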